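/- arXiv:2503.06817 — 2 statements merged into one kernel-verified Lean document; each statement's English description precedes it below -/
import Mathlib

section
/- Let q ≥ 1, let M ∈ ℝ^{q×q} be invertible with first row equal to the all-ones vector 𝟙ᵀ, let S = diag(s_1,…,s_q), let Λ = M^{-1}·S·M, let ω ∈ ℝ^q satisfy Σ_{k=1}^q ω_k = 1, let E = ω𝟙ᵀ (so E_{kj} = ω_k), let c ∈ ℝ, and set J = Λ(E − I) + cE. Then the characteristic polynomial of J equals (X − c)·∏_{k=2}^q (X + s_k); in particular the multiset of eigenvalues of J (with multiplicity) is {c, −s_2, …, −s_q}. -/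
open Matrix Polynomial

/-!
In the moment basis the matrix `E = ω 𝟙ᵀ` becomes `(M ω) e₁ᵀ`, because `𝟙ᵀ` is the first row of `M`.
Hence `J` is conjugate to `-S` with its first column replaced, and its characteristic polynomial is
read off the diagonal.
-/

section UpdateColDiagonal

variable {n R : Type*} [Fintype n] [DecidableEq n] [CommRing R]

theorem det_updateCol_diagonal (d w : n → R) (i : n) :
    ((diagonal d).updateCol i w).det = w i * ∏ k ∈ Finset.univ.erase i, d k := by
  rw [← cramer_apply, cramer_eq_adjugate_mulVec, adjugate_diagonal, mulVec_diagonal, mul_comm]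

theorem charmatrix_updateCol_diagonal (d w : n → R) (i : n) :
    charmatrix ((diagonal d).updateCol i w) =
      (diagonal fun k => X - C (d k)).updateCol i (Pi.single i X - C ∘ w) := by
  ext1 k j
  obtain rfl | hj := eq_or_ne j i
  · simp [charmatrix_apply, diagonal_apply, Pi.single_apply]
  · obtain rfl | hk := eq_or_ne k j <;> simp [*]

theorem charpoly_updateCol_diagonal (d w : n → R) (i : n) :
    ((diagonal d).updateCol i w).charpoly =
      (X - C (w i)) * ∏ k ∈ Finset.univ.erase i, (X - C (d k)) := by
  rw [charpoly, charmatrix_updateCol_diagonal, det_updateCol_diagonal, Pi.sub_apply,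
    Pi.single_eq_same, Function.comp_apply]

end UpdateColDiagonal

theorem roots_X_sub_C_mul_prod_X_add_C {ι R : Type*} [CommRing R] [IsDomain R] (a : R)
    (t : Finset ι) (s : ι → R) :
    ((X - C a) * ∏ k ∈ t, (X + C (s k))).roots = a ::ₘ t.val.map fun k => -s k := by
  rw [← roots_multiset_prod_X_sub_C (a ::ₘ t.val.map fun k => -s k)]
  simp

section CollisionJacobian

variable {n R : Type*} [Fintype n] [DecidableEq n] [CommRing R]

/-- The Jacobian `Λ (E - I) + c E` of the lattice Boltzmann collision term with relaxation
matrix `Λ`, equilibrium map `E` and source coefficient `c`. -/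
def collisionJacobian (Λ E : Matrix n n R) (c : R) : Matrix n n R :=
  Λ * (E - 1) + c • E

theorem collisionJacobian_conj {M : Matrix n n R} (hM : IsUnit M.det) (S E : Matrix n n R)
    (c : R) :
    collisionJacobian (M⁻¹ * S * M) E c = M⁻¹ * collisionJacobian S (M * E * M⁻¹) c * M := by
  simp only [collisionJacobian, mul_add, add_mul, mul_sub, sub_mul, mul_one,
    Matrix.mul_smul, Matrix.smul_mul, Matrix.mul_assoc, nonsing_inv_mul M hM,
    nonsing_inv_mul_cancel_left M _ hM]

theorem charpoly_collisionJacobian_conj {M : Matrix n n R} (hM : IsUnit M.det)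
    (S E : Matrix n n R) (c : R) :
    (collisionJacobian (M⁻¹ * S * M) E c).charpoly =
      (collisionJacobian S (M * E * M⁻¹) c).charpoly := by
  rw [collisionJacobian_conj hM, charpoly_mul_comm, mul_nonsing_inv_cancel_left M _ hM]

theorem mul_vecMulVec_row_mul_inv {M : Matrix n n R} (hM : IsUnit M.det) (ω : n → R) (i : n) :
    M * vecMulVec ω (M.row i) * M⁻¹ = vecMulVec (M *ᵥ ω) (Pi.single i 1) := by
  have row_vecMul_inv : M.row i ᵥ* M⁻¹ = Pi.single i 1 := by
    rw [← single_one_vecMul i M, vecMul_vecMul, mul_nonsing_inv M hM, vecMul_one]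
  rw [mul_vecMulVec, vecMulVec_mul, row_vecMul_inv]

theorem collisionJacobian_diagonal_vecMulVec_single (s u : n → R) (i : n) (c : R) :
    collisionJacobian (diagonal s) (vecMulVec u (Pi.single i 1)) c =
      (diagonal (-s)).updateCol i (s * (u - Pi.single i 1) + c • u) := by
  ext k j
  obtain rfl | hj := eq_or_ne j i
  · simp [collisionJacobian, vecMulVec_apply, one_apply, Pi.single_apply]
  · obtain rfl | hk := eq_or_ne k j <;> simp [collisionJacobian, vecMulVec_apply, *]

theorem charpoly_collisionJacobian {M : Matrix n n R} (hM : IsUnit M.det) (s ω : n → R) (i : n)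
    (c : R) :
    (collisionJacobian (M⁻¹ * diagonal s * M) (vecMulVec ω (M.row i)) c).charpoly =
      (X - C (s i * ((M *ᵥ ω) i - 1) + c * (M *ᵥ ω) i)) *
        ∏ k ∈ Finset.univ.erase i, (X + C (s k)) := by
  rw [charpoly_collisionJacobian_conj hM, mul_vecMulVec_row_mul_inv hM,
    collisionJacobian_diagonal_vecMulVec_single, charpoly_updateCol_diagonal]
  simp

end CollisionJacobian

theorem stmt_5_general {n R : Type*} [Fintype n] [DecidableEq n] [CommRing R] [IsDomain R]
    {M : Matrix n n R} (hM : IsUnit M.det) (s ω : n → R) (i : n) (c : R) :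
    let J := collisionJacobian (M⁻¹ * diagonal s * M) (vecMulVec ω (M.row i)) c
    let μ := s i * ((M *ᵥ ω) i - 1) + c * (M *ᵥ ω) i
    J.charpoly = (X - C μ) * ∏ k ∈ Finset.univ.erase i, (X + C (s k)) ∧
      J.charpoly.roots = μ ::ₘ (Finset.univ.erase i).val.map fun k => -s k := by
  intro J μ
  have charpoly_eq := charpoly_collisionJacobian hM s ω i c
  exact ⟨charpoly_eq, charpoly_eq ▸ roots_X_sub_C_mul_prod_X_add_C μ _ s⟩

/-- The characteristic polynomial of the MRT collision Jacobian
`J = Λ(E-I) + cE` (with `Λ = M⁻¹·S·M`, `M` invertible with all-ones first row,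
and `∑ ω = 1`) equals `(X - c)·∏_{k ≠ 0} (X + s_k)`; in particular the multiset
of eigenvalues of `J` with multiplicity is `{c, -s_2, …, -s_q}`. -/
theorem stmt_5 (q : ℕ) (hq : 1 ≤ q) (M : Matrix (Fin q) (Fin q) ℝ) (hM : IsUnit M.det)
    (hrow : ∀ j, M ⟨0, hq⟩ j = 1) (s : Fin q → ℝ) (ω : Fin q → ℝ) (hω : ∑ k, ω k = 1)
    (c : ℝ) :
    let E := Matrix.vecMulVec ω (fun _ => (1 : ℝ))
    let J := M⁻¹ * Matrix.diagonal s * M * (E - 1) + c • E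
    J.charpoly = (Polynomial.X - Polynomial.C c) *
        ∏ k ∈ Finset.univ.erase (⟨0, hq⟩ : Fin q), (Polynomial.X + Polynomial.C (s k)) ∧
    J.charpoly.roots =
      c ::ₘ (Finset.univ.erase (⟨0, hq⟩ : Fin q)).val.map (fun k => -s k) := by
  have row_eq_one : M.row ⟨0, hq⟩ = fun _ => 1 := funext hrow
  have mulVec_eq_one : (M *ᵥ ω) ⟨0, hq⟩ = 1 := by simp [mulVec, dotProduct, hrow, hω]
  simpa [row_eq_one, mulVec_eq_one, collisionJacobian] using stmt_5_general hM s ω ⟨0, hq⟩ c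
end

section
/- Consider the nine D2Q9 velocities c_1,…,c_9 = (0,0), (1,0), (0,1), (−1,0), (0,−1), (1,1), (−1,1), (−1,−1), (1,−1). Let M ∈ ℝ^{9×9} be the matrix whose (i,j) entry is p_i(c_j), where (p_1,…,p_9) = (1, X, Y, X², Y², XY, X²Y, XY², X²Y²). Let ω = (ω_0, ω_1, ω_2, ω_1, ω_2, ω̃, ω̃, ω̃, ω̃) with ω_0 + 2ω_1 + 2ω_2 + 4ω̃ = 1, let W = diag(ω), let E = ω𝟙ᵀ (so E_{kj} = ω_{k}), and let S = diag(s_0, s_x, s_y, s_{2|x²}, s_{2|y²}, s_{2|xy}, s_{3|x²y}, s_{3|xy²}, s_{4|x²y²}). Then M is invertible, and if s_{3|x²y} = s_y, s_{3|xy²} = s_x, and s_{4|x²y²} = s_{2|x²} = s_{2|y²}, then the matrix Λ·(E − I)·W with Λ = M^{-1}·S·M is symmetric. -/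
open Matrix

/-- The nine D2Q9 discrete velocities. -/
noncomputable def c9 : Fin 9 → ℝ × ℝ :=
  ![(0, 0), (1, 0), (0, 1), (-1, 0), (0, -1), (1, 1), (-1, 1), (-1, -1), (1, -1)]

/-- The nine monomials `1, X, Y, X², Y², XY, X²Y, XY², X²Y²`. -/
noncomputable def p9 : Fin 9 → ℝ → ℝ → ℝ :=
  ![fun _ _ => 1, fun x _ => x, fun _ y => y, fun x _ => x ^ 2, fun _ y => y ^ 2,
    fun x y => x * y, fun x y => x ^ 2 * y, fun x y => x * y ^ 2, fun x y => x ^ 2 * y ^ 2]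

/-- The natural D2Q9 transformation matrix `M_{ij} = p_i(c_j)`. -/
noncomputable def M9 : Matrix (Fin 9) (Fin 9) ℝ :=
  Matrix.of fun i j => p9 i (c9 j).1 (c9 j).2

/-!
Write `A = (E - I) W = ω ωᵀ - W`. Then `-M A Mᵀ` is the covariance matrix, under the weights `ω`, of
the nine monomials regarded as functions on the velocities, and `M⁻¹ S M A` is symmetric as soon as
`S` commutes with it, i.e. as soon as monomials with different relaxation rates are uncorrelated.
The weights are invariant under the two coordinate reflections, so monomials of different parity in
`X` or in `Y` are uncorrelated; and the constant monomial is uncorrelated with everything because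
the weights sum to one. The conditions on the rates say precisely that the nonconstant monomials of
equal parity relax at the same rate. Invertibility holds because `M` is, up to reordering, the
Kronecker square of the Vandermonde matrix of the nodes `0, 1, -1`.
-/

open scoped Kronecker

section SymmetricProducts

variable {n R : Type*} [Fintype n] [CommSemiring R]

theorem commute_diagonal_of_apply_eq_zero [DecidableEq n] {d : n → R} {H : Matrix n n R}
    (hH : ∀ i j, d i ≠ d j → H i j = 0) : Commute (diagonal d) H := by
  ext i j
  rw [diagonal_mul, mul_diagonal, mul_comm]
  by_cases hij : d i = d j
  · rw [hij]
  · rw [hH i j hij, zero_mul, zero_mul]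

theorem isSymm_mul_mul_transpose {m : Type*} {A : Matrix n n R} (hA : A.IsSymm)
    (P : Matrix m n R) : (P * A * Pᵀ).IsSymm := by
  rw [IsSymm, transpose_mul, transpose_mul, transpose_transpose, hA.eq, Matrix.mul_assoc]

theorem isSymm_mul_of_commute {A B : Matrix n n R} (hA : A.IsSymm) (hB : B.IsSymm)
    (hAB : Commute A B) : (A * B).IsSymm := by
  rw [IsSymm, transpose_mul, hA.eq, hB.eq, hAB.eq]

theorem isSymm_inv_mul_mul_mul {R : Type*} [CommRing R] [DecidableEq n] {M S A : Matrix n n R}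
    (hM : IsUnit M.det) (hS : S.IsSymm) (hA : A.IsSymm) (hSA : Commute S (M * A * Mᵀ)) :
    (M⁻¹ * S * M * A).IsSymm := by
  have hMt : Mᵀ * M⁻¹ᵀ = 1 := by
    rw [← transpose_mul, nonsing_inv_mul M hM, transpose_one]
  have congruence : M⁻¹ * S * M * A = M⁻¹ * (S * (M * A * Mᵀ)) * M⁻¹ᵀ := by
    simp only [mul_assoc, hMt, mul_one]
  rw [congruence]
  exact isSymm_mul_mul_transpose
    (isSymm_mul_of_commute hS (isSymm_mul_mul_transpose hA M) hSA) M⁻¹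

end SymmetricProducts

section Covariance

variable {m n R : Type*} [Fintype n] [CommRing R]

/-- The covariance of `f` and `g` with respect to the weights `ω` on a finite type. The weights may
be negative and need not sum to one. -/
def weightedCov (ω f g : n → R) : R :=
  (f * g) ⬝ᵥ ω - (f ⬝ᵥ ω) * (g ⬝ᵥ ω)

theorem weightedCov_comm (ω f g : n → R) : weightedCov ω f g = weightedCov ω g f := by
  rw [weightedCov, weightedCov, mul_comm f, mul_comm (f ⬝ᵥ ω)]

theorem weightedCov_smul_smul (ω f g : n → R) (a b : R) :
    weightedCov ω (a • f) (b • g) = a * b * weightedCov ω f g := by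
  simp only [weightedCov, smul_mul_smul_comm, smul_dotProduct, smul_eq_mul]
  ring

theorem weightedCov_one_left {ω : n → R} (hω : ∑ k, ω k = 1) (g : n → R) :
    weightedCov ω 1 g = 0 := by
  rw [weightedCov, one_mul, one_dotProduct, hω, one_mul, sub_self]

theorem weightedCov_comp_perm {ω : n → R} {σ : Equiv.Perm n} (hω : ω ∘ σ = ω) (f g : n → R) :
    weightedCov ω (f ∘ σ) (g ∘ σ) = weightedCov ω f g := by
  have mean_comp (h : n → R) : (h ∘ σ) ⬝ᵥ ω = h ⬝ᵥ ω := by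
    conv_lhs => rw [← hω, comp_equiv_dotProduct_comp_equiv]
  rw [weightedCov, ← Pi.mul_comp, mean_comp, mean_comp, mean_comp, weightedCov]

theorem weightedCov_eq_zero_of_comp_perm_eq_smul [IsDomain R] {ω f g : n → R} {σ : Equiv.Perm n}
    {a b : R} (hω : ω ∘ σ = ω) (hf : f ∘ σ = a • f) (hg : g ∘ σ = b • g) (hab : a * b ≠ 1) :
    weightedCov ω f g = 0 := by
  have invariance : a * b * weightedCov ω f g = weightedCov ω f g := by
    rw [← weightedCov_smul_smul, ← hf, ← hg, weightedCov_comp_perm hω]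
  exact (mul_left_eq_self₀.mp invariance).resolve_left hab

variable [DecidableEq n]

theorem vecMulVec_one_sub_one_mul_diagonal (ω : n → R) :
    (vecMulVec ω 1 - 1) * diagonal ω = vecMulVec ω ω - diagonal ω := by
  rw [sub_mul, one_mul, vecMulVec_mul]
  congr 2
  ext k
  rw [vecMul_diagonal, Pi.one_apply, one_mul]

theorem mul_vecMulVec_sub_diagonal_mul_transpose_apply (M : Matrix m n R) (ω : n → R) (i j : m) :
    (M * (vecMulVec ω ω - diagonal ω) * Mᵀ) i j = -weightedCov ω (M i) (M j) := by
  have second_moment : (M * diagonal ω * Mᵀ) i j = (M i * M j) ⬝ᵥ ω := by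
    rw [mul_apply]
    simp only [mul_diagonal, transpose_apply, dotProduct, Pi.mul_apply, mul_right_comm]
  rw [Matrix.mul_sub, Matrix.sub_mul, Matrix.sub_apply, second_moment, mul_vecMulVec,
    vecMulVec_mul, vecMul_transpose, vecMulVec_apply, weightedCov, neg_sub]
  rfl

theorem isSymm_inv_mul_diagonal_mul_of_weightedCov_eq_zero {M : Matrix n n R} {s ω : n → R}
    (hM : IsUnit M.det) (hcov : ∀ i j, s i ≠ s j → weightedCov ω (M i) (M j) = 0) :
    ((M⁻¹ * diagonal s * M) * (vecMulVec ω 1 - 1) * diagonal ω).IsSymm := by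
  rw [mul_assoc _ _ (diagonal ω), vecMulVec_one_sub_one_mul_diagonal]
  have hsymm : (vecMulVec ω ω - diagonal ω).IsSymm :=
    IsSymm.sub (transpose_vecMulVec ω ω) (isSymm_diagonal ω)
  refine isSymm_inv_mul_mul_mul hM (isSymm_diagonal s) hsymm ?_
  refine commute_diagonal_of_apply_eq_zero fun i j hij => ?_
  rw [mul_vecMulVec_sub_diagonal_mul_transpose_apply, hcov i j hij, neg_zero]

end Covariance

/-- The exponents `(a, b)` of the nine monomials `X ^ a * Y ^ b` listed in `p9`. -/
def exponent9 : Fin 9 → Fin 3 × Fin 3 :=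
  ![(0, 0), (1, 0), (0, 1), (2, 0), (0, 2), (1, 1), (2, 1), (1, 2), (2, 2)]

/-- The one-dimensional velocities `0, 1, -1`, whose Cartesian square is the D2Q9 stencil. -/
def node3 : Fin 3 → ℝ := ![0, 1, -1]

/-- The positions in `node3` of the two coordinates of each velocity listed in `c9`. -/
def nodeIndex9 : Fin 9 → Fin 3 × Fin 3 :=
  ![(0, 0), (1, 0), (0, 1), (2, 0), (0, 2), (1, 1), (2, 1), (2, 2), (1, 2)]

theorem exponent9_bijective : Function.Bijective exponent9 := by decide

theorem nodeIndex9_bijective : Function.Bijective nodeIndex9 := by decide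

theorem node3_injective : Function.Injective node3 := by
  intro a b
  fin_cases a <;> fin_cases b <;> norm_num [node3]

theorem p9_eq_pow_mul_pow (i : Fin 9) (x y : ℝ) :
    p9 i x y = x ^ (exponent9 i).1.val * y ^ (exponent9 i).2.val := by
  fin_cases i <;> simp [p9, exponent9]

theorem c9_eq_node3 (k : Fin 9) : c9 k = (node3 (nodeIndex9 k).1, node3 (nodeIndex9 k).2) := by
  fin_cases k <;> rfl

theorem M9_eq_submatrix_kronecker :
    M9 = ((vandermonde node3)ᵀ ⊗ₖ (vandermonde node3)ᵀ).submatrix exponent9 nodeIndex9 := by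
  ext i k
  simp [M9, p9_eq_pow_mul_pow, c9_eq_node3, vandermonde_apply]

theorem isUnit_det_M9 : IsUnit M9.det := by
  have hV : IsUnit (vandermonde node3)ᵀ := by
    rw [isUnit_transpose, isUnit_iff_isUnit_det]
    exact (det_vandermonde_ne_zero_iff.mpr node3_injective).isUnit
  rw [← isUnit_iff_isUnit_det, M9_eq_submatrix_kronecker]
  exact (isUnit_submatrix_equiv (.ofBijective _ exponent9_bijective)
    (.ofBijective _ nodeIndex9_bijective)).mpr (IsUnit.kronecker hV hV)

/-- The permutation of the velocity indices induced by the reflection `(x, y) ↦ (-x, y)`. -/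
def reflectX9 : Equiv.Perm (Fin 9) :=
  Equiv.swap 1 3 * Equiv.swap 5 6 * Equiv.swap 7 8

/-- The permutation of the velocity indices induced by the reflection `(x, y) ↦ (x, -y)`. -/
def reflectY9 : Equiv.Perm (Fin 9) :=
  Equiv.swap 2 4 * Equiv.swap 5 8 * Equiv.swap 6 7

theorem c9_reflectX9 (k : Fin 9) : c9 (reflectX9 k) = (-(c9 k).1, (c9 k).2) := by
  fin_cases k <;> simp [reflectX9, c9, Equiv.swap_apply_def]

theorem c9_reflectY9 (k : Fin 9) : c9 (reflectY9 k) = ((c9 k).1, -(c9 k).2) := by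
  fin_cases k <;> simp [reflectY9, c9, Equiv.swap_apply_def]

theorem M9_zero : M9 0 = 1 := rfl

theorem M9_comp_reflectX9 (i : Fin 9) :
    M9 i ∘ reflectX9 = (-1 : ℝ) ^ (exponent9 i).1.val • M9 i := by
  ext k
  simp [M9, c9_reflectX9, p9_eq_pow_mul_pow, neg_pow (c9 k).1, mul_assoc]

theorem M9_comp_reflectY9 (i : Fin 9) :
    M9 i ∘ reflectY9 = (-1 : ℝ) ^ (exponent9 i).2.val • M9 i := by
  ext k
  simp [M9, c9_reflectY9, p9_eq_pow_mul_pow, neg_pow (c9 k).2, mul_left_comm]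

/-- The monomials `i` and `j` of `p9` have the same parity in each of the two variables. -/
def SameParity9 (i j : Fin 9) : Prop :=
  Even ((exponent9 i).1.val + (exponent9 j).1.val) ∧
    Even ((exponent9 i).2.val + (exponent9 j).2.val)

theorem weightedCov_M9_eq_zero_of_not_sameParity9 {ω : Fin 9 → ℝ} (hX : ω ∘ reflectX9 = ω)
    (hY : ω ∘ reflectY9 = ω) {i j : Fin 9} (hij : ¬SameParity9 i j) :
    weightedCov ω (M9 i) (M9 j) = 0 := by
  have sign_ne_one {a b : ℕ} (hab : ¬Even (a + b)) : (-1 : ℝ) ^ a * (-1) ^ b ≠ 1 := by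
    rw [← pow_add, (Nat.not_even_iff_odd.mp hab).neg_one_pow]
    norm_num
  rcases not_and_or.mp hij with hodd | hodd
  · exact weightedCov_eq_zero_of_comp_perm_eq_smul hX (M9_comp_reflectX9 i) (M9_comp_reflectX9 j)
      (sign_ne_one hodd)
  · exact weightedCov_eq_zero_of_comp_perm_eq_smul hY (M9_comp_reflectY9 i) (M9_comp_reflectY9 j)
      (sign_ne_one hodd)

theorem isSymm_inv_M9_mul_diagonal_mul_of_sameParity9 {ω s : Fin 9 → ℝ} (hω : ∑ k, ω k = 1)
    (hX : ω ∘ reflectX9 = ω) (hY : ω ∘ reflectY9 = ω)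
    (hs : ∀ i j, i ≠ 0 → j ≠ 0 → SameParity9 i j → s i = s j) :
    ((M9⁻¹ * diagonal s * M9) * (vecMulVec ω 1 - 1) * diagonal ω).IsSymm := by
  refine isSymm_inv_mul_diagonal_mul_of_weightedCov_eq_zero isUnit_det_M9 fun i j hij => ?_
  rcases eq_or_ne i 0 with rfl | hi
  · rw [M9_zero, weightedCov_one_left hω]
  rcases eq_or_ne j 0 with rfl | hj
  · rw [weightedCov_comm, M9_zero, weightedCov_one_left hω]
  exact weightedCov_M9_eq_zero_of_not_sameParity9 hX hY fun hpar => hij (hs i j hi hj hpar)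

/-- The D2Q9 natural transformation matrix `M9` is invertible, and under the
symmetry conditions `s_{3|x²y} = s_y`, `s_{3|xy²} = s_x`,
`s_{4|x²y²} = s_{2|x²} = s_{2|y²}` the matrix `Λ·(E - I)·W` with `Λ = M⁻¹·S·M`
is symmetric. -/
theorem stmt_9 (ω0 ω1 ω2 ωt s0 sx sy s2x2 s2y2 s2xy s3x2y s3xy2 s4x2y2 : ℝ)
    (hsum : ω0 + 2 * ω1 + 2 * ω2 + 4 * ωt = 1) :
    IsUnit M9.det ∧
    (s3x2y = sy → s3xy2 = sx → s4x2y2 = s2x2 → s2x2 = s2y2 →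
      let ω : Fin 9 → ℝ := ![ω0, ω1, ω2, ω1, ω2, ωt, ωt, ωt, ωt]
      let W := Matrix.diagonal ω
      let E := Matrix.vecMulVec ω (fun _ => (1 : ℝ))
      let S := Matrix.diagonal ![s0, sx, sy, s2x2, s2y2, s2xy, s3x2y, s3xy2, s4x2y2]
      ((M9⁻¹ * S * M9) * (E - 1) * W).IsSymm) := by
  refine ⟨isUnit_det_M9, ?_⟩
  rintro rfl rfl rfl rfl ω _ _ _
  have total_mass : ∑ k, ω k = 1 := by
    rw [← hsum, Fin.sum_univ_succ, Fin.sum_univ_eight]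
    change ω0 + (ω1 + ω2 + ω1 + ω2 + ωt + ωt + ωt + ωt) = _
    ring
  have reflectX_invariant : ω ∘ reflectX9 = ω := by
    ext k
    fin_cases k <;> rfl
  have reflectY_invariant : ω ∘ reflectY9 = ω := by
    ext k
    fin_cases k <;> rfl
  refine isSymm_inv_M9_mul_diagonal_mul_of_sameParity9 total_mass reflectX_invariant
    reflectY_invariant fun i j hi hj hpar => ?_
  fin_cases i <;> fin_cases j <;> simp_all [SameParity9, exponent9, Nat.even_iff]
end
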